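/- Let S(0,r) be the signed double star consisting of a positive central edge z₁z₂, together with two negative pendant edges z₁u₁, z₁u₂ attached at z₁, and r positive pendant edges z₂w₁,…,z₂w_r attached at z₂ (so S(0,r) is a (r+4, r+1, 2) signed graph). If r > 2, then S(0,r) is not additively graceful. -/

import Mathlib

/-- A signed graph on vertex type `V`: a finite set of positive edges and a
finite set of negative edges, disjoint from one another, with no loops. -/
structure SignedGraph (V : Type) [DecidableEq V] where
  posEdges : Finset (Sym2 V)
  negEdges : Finset (Sym2 V)
  disjoint : Disjoint posEdges negEdges
  pos_not_diag : ∀ e ∈ posEdges, ¬ e.IsDiag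
  neg_not_diag : ∀ e ∈ negEdges, ¬ e.IsDiag

/-- Induced label on a positive edge: `|f u - f v|`. -/
def posLabel {V : Type} (f : V → ℕ) : Sym2 V → ℕ :=
  Sym2.lift ⟨fun u v => Nat.dist (f u) (f v), fun u v => Nat.dist_comm _ _⟩

/-- Induced label on a negative edge: `f u + f v`. -/
def negLabel {V : Type} (f : V → ℕ) : Sym2 V → ℕ :=
  Sym2.lift ⟨fun u v => f u + f v, fun u v => Nat.add_comm _ _⟩

/-- `f` is an additively graceful labeling of the signed graph `S`:
it is an injection into `{0, 1, …, m + ⌈(n+1)/2⌉}` whose induced labels on the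
positive edges are exactly `{1, …, m}` and on the negative edges exactly
`{1, …, n}`, where `m` (resp. `n`) is the number of positive (negative) edges.
(Note that `⌈(n+1)/2⌉ = (n+2)/2` with natural-number division.) -/
def IsAddGraceful {V : Type} [DecidableEq V] (S : SignedGraph V) (f : V → ℕ) : Prop :=
  Function.Injective f ∧
  (∀ v : V, f v ≤ S.posEdges.card + (S.negEdges.card + 2) / 2) ∧
  S.posEdges.image (posLabel f) = Finset.Icc 1 S.posEdges.card ∧
  S.negEdges.image (negLabel f) = Finset.Icc 1 S.negEdges.card

/-- Vertex type of a double star: the two centers `z₁, z₂`, the `a` positive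
pendant neighbours and `b` negative pendant neighbours of `z₁`, and the `c`
positive pendant neighbours of `z₂`. -/
abbrev DSV (a b c : ℕ) : Type := (Unit ⊕ Unit) ⊕ (Fin a ⊕ Fin b ⊕ Fin c)

/-- the first central vertex `z₁` -/
def z1 {a b c : ℕ} : DSV a b c := Sum.inl (Sum.inl ())
/-- the second central vertex `z₂` -/
def z2 {a b c : ℕ} : DSV a b c := Sum.inl (Sum.inr ())
/-- the end `vᵢ` of the `i`-th positive pendant edge at `z₁` -/
def vv {a b c : ℕ} (i : Fin a) : DSV a b c := Sum.inr (Sum.inl i)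
/-- the end `uᵢ` of the `i`-th negative pendant edge at `z₁` -/
def uu {a b c : ℕ} (i : Fin b) : DSV a b c := Sum.inr (Sum.inr (Sum.inl i))
/-- the end `wᵢ` of the `i`-th positive pendant edge at `z₂` -/
def ww {a b c : ℕ} (i : Fin c) : DSV a b c := Sum.inr (Sum.inr (Sum.inr i))

/-- The signed double star with a *positive* central edge `z₁z₂`,
`a` positive and `b` negative pendant edges at `z₁`, and `c` positive pendant
edges at `z₂`. -/
def doubleStarPos (a b c : ℕ) : SignedGraph (DSV a b c) where
  posEdges :=
    {s(z1, z2)} ∪ Finset.univ.image (fun i : Fin a => s(z1, vv i)) ∪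
      Finset.univ.image (fun i : Fin c => s(z2, ww i))
  negEdges := Finset.univ.image (fun i : Fin b => s(z1, uu i))
  disjoint := by
    rw [Finset.disjoint_left]
    intro e he1 he2
    simp only [Finset.mem_union, Finset.mem_singleton, Finset.mem_image,
      Finset.mem_univ, true_and] at he1 he2
    obtain ⟨j, rfl⟩ := he2
    rcases he1 with (h | ⟨i, h⟩) | ⟨i, h⟩ <;>
      simp [z1, z2, vv, uu, ww, Sym2.eq_iff] at h
  pos_not_diag := by
    intro e he
    simp only [Finset.mem_union, Finset.mem_singleton, Finset.mem_image,
      Finset.mem_univ, true_and] at he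
    rcases he with (rfl | ⟨i, rfl⟩) | ⟨i, rfl⟩ <;>
      simp [z1, z2, vv, ww, Sym2.mk_isDiag_iff]
  neg_not_diag := by
    intro e he
    simp only [Finset.mem_image, Finset.mem_univ, true_and] at he
    obtain ⟨i, rfl⟩ := he
    simp [z1, uu, Sym2.mk_isDiag_iff]

/-!
The `r + 4` vertices receive distinct labels in `{0, …, r + 3}`, so every label is used. The
negative edges at `z₁` have labels `1` and `2`, which forces `f z₁ = 0` and leaves `1`, `2` for the
`uᵢ`. Hence the neighbours of `z₂` carry all the labels `0, 3, 4, …, r + 3` other than `f z₂`, where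
`3 ≤ f z₂ ≤ r + 1` because `f z₂` is the label of the central edge; so `r ≥ 2`. Two neighbours of
`z₂` with labels symmetric about `f z₂` would give two positive edges the same label. If `f z₂ > 3`,
such a pair is `f z₂ - 1, f z₂ + 1`; if `f z₂ = 3`, it is `0, 6`, which is available once `r ≥ 3`.
-/

namespace IsAddGraceful

variable {V : Type} [DecidableEq V] {S : SignedGraph V} {f : V → ℕ}

theorem exists_apply_eq [Fintype V] (hf : IsAddGraceful S f)
    (hV : S.posEdges.card + (S.negEdges.card + 2) / 2 < Fintype.card V) {k : ℕ}
    (hk : k ≤ S.posEdges.card + (S.negEdges.card + 2) / 2) : ∃ v, f v = k := by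
  obtain ⟨hinj, hle, -, -⟩ := hf
  have hsurj : Set.SurjOn f (Finset.univ : Finset V)
      (Finset.range (S.posEdges.card + (S.negEdges.card + 2) / 2 + 1)) :=
    Finset.surjOn_of_injOn_of_card_le f
      (fun v _ ↦ Finset.mem_coe.2 (Finset.mem_range_succ_iff.2 (hle v))) hinj.injOn
      (by rwa [Finset.card_range, Finset.card_univ])
  obtain ⟨v, -, hv⟩ := hsurj (Finset.mem_coe.2 (Finset.mem_range_succ_iff.2 hk))
  exact ⟨v, hv⟩

theorem injOn_posLabel (hf : IsAddGraceful S f) : Set.InjOn (posLabel f) S.posEdges :=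
  Finset.card_image_iff.1 (by rw [hf.2.2.1, Nat.card_Icc, Nat.add_sub_cancel])

theorem dist_le_card_posEdges (hf : IsAddGraceful S f) {u v : V} (huv : s(u, v) ∈ S.posEdges) :
    Nat.dist (f u) (f v) ≤ S.posEdges.card :=
  (Finset.mem_Icc.1 (hf.2.2.1 ▸ Finset.mem_image_of_mem (posLabel f) huv)).2

theorem add_ne_two_mul_of_posEdges (hf : IsAddGraceful S f) {x u v : V}
    (hu : s(x, u) ∈ S.posEdges) (hv : s(x, v) ∈ S.posEdges) (huv : u ≠ v) :
    f u + f v ≠ 2 * f x := by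
  intro hsum
  have hlabel : posLabel f s(x, u) = posLabel f s(x, v) := by
    change Nat.dist (f x) (f u) = Nat.dist (f x) (f v)
    unfold Nat.dist
    omega
  exact huv (Sym2.congr_right.1 (hf.injOn_posLabel hu hv hlabel))

section NegStar

variable {z : V}

theorem exists_negEdge_add_eq (hf : IsAddGraceful S f) (hz : ∀ e ∈ S.negEdges, z ∈ e) {k : ℕ}
    (hk : k ∈ Finset.Icc 1 S.negEdges.card) : ∃ u, s(z, u) ∈ S.negEdges ∧ f z + f u = k := by
  rw [← hf.2.2.2, Finset.mem_image] at hk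
  obtain ⟨e, he, hlabel⟩ := hk
  obtain ⟨u, rfl⟩ := Sym2.mem_iff_exists.1 (hz e he)
  exact ⟨u, he, hlabel⟩

theorem apply_center_eq_zero (hf : IsAddGraceful S f) (hz : ∀ e ∈ S.negEdges, z ∈ e)
    (hcard : 2 ≤ S.negEdges.card) : f z = 0 := by
  obtain ⟨u, -, hu⟩ := hf.exists_negEdge_add_eq hz (Finset.mem_Icc.2 ⟨le_rfl, by omega⟩)
  obtain ⟨v, hzv, hv⟩ := hf.exists_negEdge_add_eq hz (Finset.mem_Icc.2 ⟨one_le_two, hcard⟩)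
  have hne : f z ≠ f v := hf.1.ne fun h ↦ S.neg_not_diag _ hzv (Sym2.mk_isDiag_iff.2 h)
  omega

theorem apply_le_card_negEdges_iff (hf : IsAddGraceful S f) (hz : ∀ e ∈ S.negEdges, z ∈ e)
    (hcard : 2 ≤ S.negEdges.card) {v : V} :
    f v ≤ S.negEdges.card ↔ ∃ e ∈ S.negEdges, v ∈ e := by
  have hz0 : f z = 0 := hf.apply_center_eq_zero hz hcard
  constructor
  · intro hv
    rcases Nat.eq_zero_or_pos (f v) with hv0 | hvpos
    · obtain ⟨e, he⟩ := Finset.card_pos.1 (two_pos.trans_le hcard)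
      exact ⟨e, he, hf.1 (hv0.trans hz0.symm) ▸ hz e he⟩
    · obtain ⟨u, hu, hlabel⟩ := hf.exists_negEdge_add_eq hz (Finset.mem_Icc.2 ⟨hvpos, hv⟩)
      have huv : u = v := hf.1 (by omega)
      exact ⟨s(z, u), hu, huv ▸ Sym2.mem_mk_right z u⟩
  · rintro ⟨e, he, hve⟩
    obtain ⟨u, rfl⟩ := Sym2.mem_iff_exists.1 hve
    have hlabel : f v + f u ≤ S.negEdges.card :=
      (Finset.mem_Icc.1 (hf.2.2.2 ▸ Finset.mem_image_of_mem (negLabel f) he)).2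
    omega

end NegStar

end IsAddGraceful

section DoubleStar

variable {a b c : ℕ}

theorem z2_z1_mem_posEdges_doubleStarPos : s(z2, z1) ∈ (doubleStarPos a b c).posEdges := by
  simp [doubleStarPos, Sym2.eq_swap (a := z2)]

theorem z2_ww_mem_posEdges_doubleStarPos (i : Fin c) :
    s(z2, ww i) ∈ (doubleStarPos a b c).posEdges :=
  Finset.mem_union_right _ (Finset.mem_image_of_mem _ (Finset.mem_univ i))

theorem z1_mem_of_mem_negEdges_doubleStarPos {e : Sym2 (DSV a b c)}
    (he : e ∈ (doubleStarPos a b c).negEdges) : z1 ∈ e := by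
  obtain ⟨i, -, rfl⟩ := Finset.mem_image.1 he
  exact Sym2.mem_mk_left _ _

theorem z1_uu_mem_negEdges_doubleStarPos (i : Fin b) :
    s(z1, uu i) ∈ (doubleStarPos a b c).negEdges :=
  Finset.mem_image_of_mem _ (Finset.mem_univ i)

theorem z2_notMem_of_mem_negEdges_doubleStarPos {e : Sym2 (DSV a b c)}
    (he : e ∈ (doubleStarPos a b c).negEdges) : z2 ∉ e := by
  obtain ⟨i, -, rfl⟩ := Finset.mem_image.1 he
  simp [z1, z2, uu]

theorem card_negEdges_doubleStarPos : (doubleStarPos a b c).negEdges.card = b := by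
  have hinj : Function.Injective fun i : Fin b ↦ (s(z1, uu i) : Sym2 (DSV a b c)) :=
    fun i j h ↦ by simpa [z1, uu] using h
  exact (Finset.card_image_of_injective _ hinj).trans (Finset.card_fin b)

theorem card_posEdges_doubleStarPos : (doubleStarPos a b c).posEdges.card = a + c + 1 := by
  have hinj₁ : Function.Injective fun i : Fin a ↦ (s(z1, vv i) : Sym2 (DSV a b c)) :=
    fun i j h ↦ by simpa [z1, vv] using h
  have hinj₂ : Function.Injective fun i : Fin c ↦ (s(z2, ww i) : Sym2 (DSV a b c)) :=
    fun i j h ↦ by simpa [z2, ww] using h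
  rw [doubleStarPos, Finset.card_union_of_disjoint, Finset.card_union_of_disjoint,
    Finset.card_image_of_injective _ hinj₁, Finset.card_image_of_injective _ hinj₂,
    Finset.card_singleton, Finset.card_fin, Finset.card_fin]
  · omega
  · simp [z1, z2, vv]
  · simp [Finset.disjoint_left, z1, z2, vv, ww]

theorem card_DSV : Fintype.card (DSV a b c) = a + b + c + 2 := by
  simp only [Fintype.card_sum, Fintype.card_unit, Fintype.card_fin]
  omega

namespace IsAddGraceful

variable {f : DSV a b c → ℕ}

theorem apply_z1_eq_zero (hf : IsAddGraceful (doubleStarPos a b c) f) (hb : 2 ≤ b) : f z1 = 0 :=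
  hf.apply_center_eq_zero (fun _ ↦ z1_mem_of_mem_negEdges_doubleStarPos)
    (hb.trans_eq card_negEdges_doubleStarPos.symm)

theorem apply_le_iff_exists_mem_negEdges (hf : IsAddGraceful (doubleStarPos a b c) f)
    (hb : 2 ≤ b) {v : DSV a b c} :
    f v ≤ b ↔ ∃ e ∈ (doubleStarPos a b c).negEdges, v ∈ e := by
  rw [← hf.apply_le_card_negEdges_iff (fun _ ↦ z1_mem_of_mem_negEdges_doubleStarPos)
    (hb.trans_eq card_negEdges_doubleStarPos.symm), card_negEdges_doubleStarPos]

theorem lt_apply_z2 (hf : IsAddGraceful (doubleStarPos a b c) f) (hb : 2 ≤ b) : b < f z2 := by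
  rw [← not_le, hf.apply_le_iff_exists_mem_negEdges hb]
  rintro ⟨e, he, hz2⟩
  exact z2_notMem_of_mem_negEdges_doubleStarPos he hz2

theorem apply_z2_le (hf : IsAddGraceful (doubleStarPos a b c) f) (hb : 2 ≤ b) :
    f z2 ≤ a + c + 1 := by
  have hdist := hf.dist_le_card_posEdges z2_z1_mem_posEdges_doubleStarPos
  rwa [hf.apply_z1_eq_zero hb, Nat.dist_zero_right, card_posEdges_doubleStarPos] at hdist

theorem exists_z2_posEdge_apply_eq {r : ℕ} {f : DSV 0 2 r → ℕ}
    (hf : IsAddGraceful (doubleStarPos 0 2 r) f) {k : ℕ} (hk : k = 0 ∨ 3 ≤ k) (hkr : k ≤ r + 3)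
    (hkz : k ≠ f z2) : ∃ v, s(z2, v) ∈ (doubleStarPos 0 2 r).posEdges ∧ f v = k := by
  rcases hk with rfl | hk
  · exact ⟨z1, z2_z1_mem_posEdges_doubleStarPos, hf.apply_z1_eq_zero le_rfl⟩
  obtain ⟨v, hv⟩ : ∃ v, f v = k := by
    apply hf.exists_apply_eq <;>
      simp only [card_posEdges_doubleStarPos, card_negEdges_doubleStarPos, card_DSV] <;> omega
  have hneg : ∀ e ∈ (doubleStarPos 0 2 r).negEdges, v ∉ e := by
    intro e he hve
    have hv2 : f v ≤ 2 := (hf.apply_le_iff_exists_mem_negEdges le_rfl).2 ⟨e, he, hve⟩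
    omega
  rcases v with (⟨⟩ | ⟨⟩) | i | i | i
  · exact absurd (Sym2.mem_mk_left _ _) (hneg _ (z1_uu_mem_negEdges_doubleStarPos 0))
  · exact absurd hv.symm hkz
  · exact i.elim0
  · exact absurd (Sym2.mem_mk_right _ _) (hneg _ (z1_uu_mem_negEdges_doubleStarPos i))
  · exact ⟨ww i, z2_ww_mem_posEdges_doubleStarPos i, hv⟩

end IsAddGraceful

end DoubleStar

theorem doubleStar_twoNeg_l0_not_addGraceful_general (r : ℕ) (hr : r ≠ 2) :
    ¬ ∃ f : DSV 0 2 r → ℕ, IsAddGraceful (doubleStarPos 0 2 r) f := by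
  rintro ⟨f, hf⟩
  have hgt : 2 < f z2 := hf.lt_apply_z2 le_rfl
  have hle : f z2 ≤ 0 + r + 1 := hf.apply_z2_le le_rfl
  obtain ⟨d, hd, hdz, hlow, hhigh⟩ : ∃ d, 0 < d ∧ d ≤ f z2 ∧
      (f z2 - d = 0 ∨ 3 ≤ f z2 - d) ∧ f z2 + d ≤ r + 3 := by
    rcases eq_or_ne (f z2) 3 with h3 | h3
    · exact ⟨3, by omega⟩
    · exact ⟨1, by omega⟩
  obtain ⟨u, hu, hfu⟩ := hf.exists_z2_posEdge_apply_eq hlow (by omega) (by omega)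
  obtain ⟨v, hv, hfv⟩ := hf.exists_z2_posEdge_apply_eq (.inr (by omega)) hhigh (by omega)
  have huv : u ≠ v := by
    rintro rfl
    omega
  exact hf.add_ne_two_mul_of_posEdges hu hv huv (by omega)

/-- The signed double star with positive central edge `z₁z₂`,
two negative pendant edges at `z₁` (and no positive pendants there), and `r`
positive pendant edges at `z₂`, is not additively graceful when `r > 2`. -/
theorem doubleStar_twoNeg_l0_not_addGraceful (r : ℕ) (hr : 2 < r) :
    ¬ ∃ f : DSV 0 2 r → ℕ, IsAddGraceful (doubleStarPos 0 2 r) f :=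
  doubleStar_twoNeg_l0_not_addGraceful_general r hr.ne'
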